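/- (Theorem 1, forward half.) Fix t₀ ∈ ℝ and ω₀ ∈ ℝ³. Let A : [t₀, ∞) → GL(3, ℝ) be a family of invertible 3×3 matrices with A(t₀) = Id; for each t let λ₃(t) be the largest eigenvalue of A(t)ᵀA(t) and ξ₃(t) a unit eigenvector for λ₃(t). Assume: (i) the trajectory vorticity ω(t) = A(t) ω₀ is uniformly bounded, i.e. there is M with |A(t) ω₀| ≤ M for all t ≥ t₀; (ii) the maximal forward Lyapunov exponent exists and is positive, i.e. (1/(2(t−t₀))) log λ₃(t) → μ₃⁺ with 0 < μ₃⁺ < ∞ as t → ∞; (iii) the dominant forward Lyapunov vector exists, ξ₃(t) → ζ₃⁺ as t → ∞. Then ⟨ω₀, ζ₃⁺⟩ = 0. -/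

import Mathlib

open scoped RealInnerProductSpace
open Matrix MeasureTheory Filter

/-- Action of a 3×3 real matrix on `ℝ³` with the Euclidean inner product. -/
noncomputable def mulE (A : Matrix (Fin 3) (Fin 3) ℝ) (x : EuclideanSpace ℝ (Fin 3)) :
    EuclideanSpace ℝ (Fin 3) :=
  Matrix.toEuclideanLin A x

/-!
If `T† T ξ = r ξ`, then `⟪T v, T ξ⟫ = r ⟪v, ξ⟫` and `‖T ξ‖² = r ‖ξ‖²`, so Cauchy–Schwarz gives
`r |⟪v, ξ⟫|² ≤ ‖T v‖² ‖ξ‖²`. A positive Lyapunov exponent forces `r → ∞` along the trajectory;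
as `T v` stays bounded and `ξ` converges, `⟪v, ξ⟫` must tend to `0`.
-/

theorem tendsto_atTop_of_tendsto_log_div {ι : Type*} {l : Filter ι} {f g : ι → ℝ} {c : ℝ}
    (hc : 0 < c) (hf : ∀ᶠ i in l, 0 ≤ f i) (hg : Tendsto g l atTop)
    (hfg : Tendsto (fun i ↦ Real.log (f i) / g i) l (nhds c)) :
    Tendsto f l atTop := by
  have hlog : Tendsto (fun i ↦ Real.log (f i)) l atTop := by
    refine (hfg.pos_mul_atTop hc hg).congr' ?_
    filter_upwards [hg.eventually_ne_atTop 0] with i hi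
    exact div_mul_cancel₀ _ hi
  exact tendsto_atTop_mono' l (hf.mono fun _ ↦ Real.log_le_self) hlog

section AdjointCompSelf

open ContinuousLinearMap
open scoped InnerProduct InnerProductSpace

variable {𝕜 E F : Type*} [RCLike 𝕜]
  [NormedAddCommGroup E] [InnerProductSpace 𝕜 E] [CompleteSpace E]
  [NormedAddCommGroup F] [InnerProductSpace 𝕜 F] [CompleteSpace F]

theorem inner_map_map_of_adjoint_comp_self_eq_smul {T : E →L[𝕜] F} {c : 𝕜} {ξ : E}
    (h : (T† ∘L T) ξ = c • ξ) (v : E) : ⟪T v, T ξ⟫_𝕜 = c * ⟪v, ξ⟫_𝕜 := by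
  rw [← adjoint_inner_right, ← inner_smul_right, ← h, ContinuousLinearMap.comp_apply]

theorem norm_map_sq_of_adjoint_comp_self_eq_smul {T : E →L[𝕜] F} {r : ℝ} {ξ : E}
    (h : (T† ∘L T) ξ = (r : 𝕜) • ξ) : ‖T ξ‖ ^ 2 = r * ‖ξ‖ ^ 2 := by
  have hξ := inner_map_map_of_adjoint_comp_self_eq_smul h ξ
  rw [inner_self_eq_norm_sq_to_K, inner_self_eq_norm_sq_to_K] at hξ
  exact_mod_cast hξ

theorem norm_inner_sq_mul_le_of_adjoint_comp_self_eq_smul {T : E →L[𝕜] F} {r : ℝ} {ξ : E}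
    (h : (T† ∘L T) ξ = (r : 𝕜) • ξ) (v : E) :
    ‖⟪v, ξ⟫_𝕜‖ ^ 2 * r ≤ ‖T v‖ ^ 2 * ‖ξ‖ ^ 2 := by
  rcases le_or_gt r 0 with hr | hr
  · exact (mul_nonpos_of_nonneg_of_nonpos (by positivity) hr).trans (by positivity)
  have hCS : r * ‖⟪v, ξ⟫_𝕜‖ ≤ ‖T v‖ * ‖T ξ‖ := by
    simpa only [inner_map_map_of_adjoint_comp_self_eq_smul h, norm_mul, RCLike.norm_ofReal,
      abs_of_pos hr] using norm_inner_le_norm (𝕜 := 𝕜) (T v) (T ξ)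
  suffices ‖⟪v, ξ⟫_𝕜‖ ^ 2 * r * r ≤ ‖T v‖ ^ 2 * ‖ξ‖ ^ 2 * r from le_of_mul_le_mul_right this hr
  calc ‖⟪v, ξ⟫_𝕜‖ ^ 2 * r * r = (r * ‖⟪v, ξ⟫_𝕜‖) ^ 2 := by ring
    _ ≤ (‖T v‖ * ‖T ξ‖) ^ 2 := by gcongr
    _ = ‖T v‖ ^ 2 * ‖ξ‖ ^ 2 * r := by rw [mul_pow, norm_map_sq_of_adjoint_comp_self_eq_smul h]; ring

theorem inner_eq_zero_of_tendsto_eigenvalue_atTop {ι : Type*} {l : Filter ι} [l.NeBot]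
    {T : ι → E →L[𝕜] F} {r : ι → ℝ} {ξ : ι → E} {v ζ : E} {M : ℝ}
    (heig : ∀ᶠ i in l, ((T i)† ∘L T i) (ξ i) = (r i : 𝕜) • ξ i)
    (hbound : ∀ᶠ i in l, ‖T i v‖ ≤ M)
    (hr : Tendsto r l atTop) (hξ : Tendsto ξ l (nhds ζ)) :
    ⟪v, ζ⟫_𝕜 = 0 := by
  have hle : ∀ᶠ i in l, ‖⟪v, ξ i⟫_𝕜‖ ^ 2 ≤ M ^ 2 * ‖ξ i‖ ^ 2 / r i := by
    filter_upwards [heig, hbound, hr.eventually_gt_atTop 0] with i hi hM hpos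
    rw [le_div_iff₀ hpos]
    exact (norm_inner_sq_mul_le_of_adjoint_comp_self_eq_smul hi v).trans (by gcongr)
  have hzero : Tendsto (fun i ↦ ‖⟪v, ξ i⟫_𝕜‖ ^ 2) l (nhds 0) :=
    squeeze_zero' (.of_forall fun _ ↦ by positivity) hle
      (((hξ.norm.pow 2).const_mul (M ^ 2)).div_atTop hr)
  have hlim : Tendsto (fun i ↦ ‖⟪v, ξ i⟫_𝕜‖ ^ 2) l (nhds (‖⟪v, ζ⟫_𝕜‖ ^ 2)) :=
    (tendsto_const_nhds.inner hξ).norm.pow 2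
  exact norm_eq_zero.1 (pow_eq_zero_iff two_ne_zero |>.1 (tendsto_nhds_unique hlim hzero))

theorem stmt_2_general (t₀ : ℝ) (v : E) (T : ℝ → E →L[𝕜] F) (r : ℝ → ℝ) (ξ : ℝ → E)
    (heig : ∀ t, t₀ ≤ t →
      Module.End.HasEigenvector ((T t)† ∘L T t).toLinearMap (r t : 𝕜) (ξ t))
    (M : ℝ) (hbound : ∀ t, t₀ ≤ t → ‖T t v‖ ≤ M)
    (μ : ℝ) (hμ : 0 < μ)
    (hLyap : Tendsto (fun t ↦ Real.log (r t) / (2 * (t - t₀))) atTop (nhds μ))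
    (ζ : E) (hξ : Tendsto ξ atTop (nhds ζ)) :
    ⟪v, ζ⟫_𝕜 = 0 := by
  have hlate : ∀ᶠ t in atTop, t₀ ≤ t := eventually_ge_atTop t₀
  have htime : Tendsto (fun t ↦ 2 * (t - t₀)) atTop atTop :=
    (tendsto_atTop_add_const_right atTop (-t₀) tendsto_id).const_mul_atTop two_pos
  have hnonneg : ∀ᶠ t in atTop, 0 ≤ r t :=
    hlate.mono fun t ht ↦
      eigenvalue_nonneg_of_nonneg (Module.End.hasEigenvalue_of_hasEigenvector (heig t ht))
        (isPositive_adjoint_comp_self (T t)).re_inner_nonneg_right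
  have hr : Tendsto r atTop atTop := tendsto_atTop_of_tendsto_log_div hμ hnonneg htime hLyap
  exact inner_eq_zero_of_tendsto_eigenvalue_atTop
    (hlate.mono fun t ht ↦ (heig t ht).apply_eq_smul) (hlate.mono hbound) hr hξ

theorem toEuclideanCLM_conjTranspose_mul_self {n : Type*} [Fintype n] [DecidableEq n]
    (A : Matrix n n 𝕜) :
    toEuclideanCLM (n := n) (𝕜 := 𝕜) (Aᴴ * A) =
      (toEuclideanCLM (n := n) (𝕜 := 𝕜) A)† ∘L toEuclideanCLM (n := n) (𝕜 := 𝕜) A := by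
  rw [map_mul, ← star_eq_conjTranspose, map_star]
  rfl

end AdjointCompSelf

theorem hasEigenvector_adjoint_comp_toEuclideanCLM {n : Type*} [Fintype n] [DecidableEq n]
    {A : Matrix n n ℝ} {r : ℝ} {ξ : EuclideanSpace ℝ n} (hξ : ξ ≠ 0)
    (h : toEuclideanLin (Aᵀ * A) ξ = r • ξ) :
    Module.End.HasEigenvector
      (ContinuousLinearMap.adjoint (toEuclideanCLM (n := n) (𝕜 := ℝ) A) ∘L
        toEuclideanCLM (n := n) (𝕜 := ℝ) A).toLinearMap r ξ := by
  rw [← toEuclideanCLM_conjTranspose_mul_self, conjTranspose_eq_transpose_of_trivial]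
  exact ⟨Module.End.mem_eigenspace_iff.2 h, hξ⟩

/-- Theorem 1, forward half: if the vorticity `ω(t) = A(t) ω₀` is uniformly
bounded, the maximal forward Lyapunov exponent exists and is positive, and the dominant
forward Lyapunov vector `ζ₃⁺` exists, then `⟨ω₀, ζ₃⁺⟩ = 0`. -/
theorem stmt_2 (t₀ : ℝ) (ω₀ : EuclideanSpace ℝ (Fin 3))
    (A : ℝ → Matrix (Fin 3) (Fin 3) ℝ)
    (hAinv : ∀ t, t₀ ≤ t → IsUnit (A t)) (hA0 : A t₀ = 1)
    (lam3 : ℝ → ℝ) (xi3 : ℝ → EuclideanSpace ℝ (Fin 3))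
    (hunit : ∀ t, t₀ ≤ t → ‖xi3 t‖ = 1)
    (heig : ∀ t, t₀ ≤ t → mulE ((A t)ᵀ * A t) (xi3 t) = lam3 t • xi3 t)
    (hmax : ∀ t, t₀ ≤ t → ∀ (μ : ℝ) (v : EuclideanSpace ℝ (Fin 3)), v ≠ 0 →
      mulE ((A t)ᵀ * A t) v = μ • v → μ ≤ lam3 t)
    (M : ℝ) (hbound : ∀ t, t₀ ≤ t → ‖mulE (A t) ω₀‖ ≤ M)
    (μ₃ : ℝ) (hμpos : 0 < μ₃)
    (hLyap : Tendsto (fun t => Real.log (lam3 t) / (2 * (t - t₀))) atTop (nhds μ₃))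
    (ζ₃ : EuclideanSpace ℝ (Fin 3)) (hvec : Tendsto xi3 atTop (nhds ζ₃)) :
    ⟪ω₀, ζ₃⟫ = 0 :=
  stmt_2_general t₀ ω₀ (fun t ↦ toEuclideanCLM (n := Fin 3) (𝕜 := ℝ) (A t)) lam3 xi3
    (fun t ht ↦ hasEigenvector_adjoint_comp_toEuclideanCLM
      (ne_zero_of_norm_ne_zero (hunit t ht ▸ one_ne_zero)) (heig t ht))
    M hbound μ₃ hμpos hLyap ζ₃ hvec
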